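/- arXiv:1905.07225 — 2 statements merged into one kernel-verified Lean document; each statement's English description precedes it below -/
import Mathlib

section
/- For all η,η' ∈ ℂ and all w,x,y,z ∈ ℤ/3ℤ with y ≠ z, one has M^{wx/yz}[η,η'] · J² = M^{wx/(y+1)(z+1)}[η,η']. -/
noncomputable def ω : ℂ := Complex.exp (2 * Real.pi * Complex.I / 3)

def J : Matrix (Fin 3) (Fin 3) ℂ := !![0,1,0; 0,0,1; 1,0,0]

noncomputable def W : Matrix (Fin 3) (Fin 3) ℂ := !![1,1,1; 1,ω,ω^2; 1,ω^2,ω]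

/-- generalized cevian operator `S[η,η'] = W ⬝ diag(1,η',η) ⬝ W⁻¹` -/
noncomputable def S (η η' : ℂ) : Matrix (Fin 3) (Fin 3) ℂ :=
  W * Matrix.diagonal ![1, η', η] * W⁻¹

/-- `ω^k` for `k : ZMod 3` (well defined since `ω^3 = 1`). -/
noncomputable def ωz (k : ZMod 3) : ℂ := ω ^ k.val

/-- `J^k` for `k : ZMod 3` (well defined since `J^3 = 1`). -/
def Jz (k : ZMod 3) : Matrix (Fin 3) (Fin 3) ℂ := J ^ k.val

/-- generalized median operator `M^{wx/yz}[η,η']` -/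
noncomputable def M (η η' : ℂ) (w x y z : ZMod 3) : Matrix (Fin 3) (Fin 3) ℂ :=
  S ((η * ωz (-x) - ωz (-w)) / (ωz (-z) - ωz (-y)))
    ((η' * ωz x - ωz w) / (ωz z - ωz y))

theorem isPrimitiveRoot_ω : IsPrimitiveRoot ω 3 := by
  simpa [ω] using Complex.isPrimitiveRoot_exp 3 (by norm_num)

theorem ω_pow_three : ω ^ 3 = 1 := isPrimitiveRoot_ω.pow_eq_one

theorem one_add_ω_add_ω_sq : 1 + ω + ω ^ 2 = 0 := by
  simpa [Finset.sum_range_succ] using isPrimitiveRoot_ω.geom_sum_eq_zero (by norm_num)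

theorem ωz_add (j k : ZMod 3) : ωz (j + k) = ωz j * ωz k := by
  rw [ωz, ωz, ωz, ← pow_add, ZMod.val_add, ← pow_eq_pow_mod _ ω_pow_three]

theorem ωz_one : ωz 1 = ω := by
  simp [ωz, ZMod.val_one]

theorem ωz_neg_one : ωz (-1) = ω ^ 2 := by
  rw [ωz, show (-1 : ZMod 3).val = 2 from rfl]

theorem isUnit_det_W : IsUnit W.det := by
  have h : W * !![1, 1, 1; 1, ω ^ 2, ω; 1, ω, ω ^ 2] = (3 : ℂ) • 1 := by
    ext i j
    fin_cases i <;> fin_cases j <;> simp [W, Matrix.mul_apply, Fin.sum_univ_three] <;>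
      grind [ω_pow_three, one_add_ω_add_ω_sq]
  have hdet := congrArg Matrix.det h
  rw [Matrix.det_mul, Matrix.det_smul, Matrix.det_one] at hdet
  refine isUnit_iff_ne_zero.mpr (left_ne_zero_of_mul (hdet.trans_ne ?_))
  norm_num

/-- The columns of `W` are eigenvectors of `J ^ 2`. -/
theorem J_sq_mul_W : J ^ 2 * W = W * Matrix.diagonal ![1, ω ^ 2, ω] := by
  ext i j
  fin_cases i <;> fin_cases j <;>
    simp [J, W, pow_two, Matrix.mul_apply, Fin.sum_univ_three] <;>
    grind [ω_pow_three]

theorem S_mul_J_sq (η η' : ℂ) : S η η' * J ^ 2 = S (η * ω) (η' * ω ^ 2) := by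
  have h : W⁻¹ * J ^ 2 = Matrix.diagonal ![1, ω ^ 2, ω] * W⁻¹ := by
    calc W⁻¹ * J ^ 2 = W⁻¹ * (J ^ 2 * W) * W⁻¹ := by
          rw [Matrix.mul_assoc, Matrix.mul_nonsing_inv_cancel_right _ _ isUnit_det_W]
      _ = Matrix.diagonal ![1, ω ^ 2, ω] * W⁻¹ := by
          rw [J_sq_mul_W, Matrix.nonsing_inv_mul_cancel_left _ _ isUnit_det_W]
  rw [S, S, Matrix.mul_assoc, h, ← Matrix.mul_assoc, Matrix.mul_assoc W,
    Matrix.diagonal_mul_diagonal]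
  congr 3
  ext i
  fin_cases i <;> simp

theorem median_mul_J_sq (η η' : ℂ) (w x y z : ZMod 3) (hyz : y ≠ z) :
    M η η' w x y z * J ^ 2 = M η η' w x (y + 1) (z + 1) := by
  have hinv : ω⁻¹ = ω ^ 2 := inv_eq_of_mul_eq_one_right (by rw [← ω_pow_three]; ring)
  have hinv_sq : (ω ^ 2)⁻¹ = ω := by rw [← hinv, inv_inv]
  rw [M, M, S_mul_J_sq]
  simp only [neg_add, ωz_add, ωz_one, ωz_neg_one, ← sub_mul]
  rw [← div_div, ← div_div, div_eq_mul_inv _ ω, div_eq_mul_inv _ (ω ^ 2), hinv, hinv_sq]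
end

section
/- Let Δ = (0, i, −i) ∈ ℂ³ and, for t ∈ ℝ, set η(t) = −2e^{2πit} + e^{−4πit}, η'(t) = 2e^{−2πit} + e^{4πit}, and Δ(t) := S[η(t), η'(t)]·Δ. Then the first vertex of Δ(t) equals (4√3/3)·cos(2πt) + i·(2√3/3)·sin(4πt), and every vertex z of Δ(t) lies on the figure-eight curve X² = (3/16)·X⁴ + Y², where X = Re z and Y = Im z. -/
theorem ω_eq : ω = -1 / 2 + (Real.sqrt 3 / 2 : ℝ) * Complex.I := by
  have h : (2 * Real.pi * Complex.I / 3 : ℂ) = ((Real.pi - Real.pi / 3 : ℝ) : ℂ) * Complex.I := by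
    push_cast; ring
  rw [ω, h, Complex.exp_mul_I, ← Complex.ofReal_cos, ← Complex.ofReal_sin, Real.cos_pi_sub,
    Real.sin_pi_sub, Real.cos_pi_div_three, Real.sin_pi_div_three]
  push_cast; ring

theorem sqrt_three_sq : ((Real.sqrt 3 : ℝ) : ℂ) ^ 2 = 3 := by
  rw [← Complex.ofReal_pow, Real.sq_sqrt (by norm_num)]; norm_num

theorem ω_sq : ω ^ 2 = -1 - ω := by
  rw [ω_eq]; push_cast
  linear_combination (1 / 4 * Complex.I ^ 2) * sqrt_three_sq + 3 / 4 * Complex.I_sq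

/-- The operator `S` acts diagonally on the Fourier coordinates given by `W`. -/
theorem S_mulVec_W_mulVec (η η' : ℂ) (c : Fin 3 → ℂ) :
    (S η η').mulVec (W.mulVec c) = W.mulVec ![c 0, η' * c 1, η * c 2] := by
  rw [S, Matrix.mulVec_mulVec, Matrix.mul_assoc, Matrix.nonsing_inv_mul _ isUnit_det_W,
    Matrix.mul_one, ← Matrix.mulVec_mulVec]
  congr 1
  ext k
  fin_cases k <;> simp [Matrix.mulVec_diagonal]

theorem triangle_eq_W_mulVec : ![0, Complex.I, -Complex.I] =
    W.mulVec ![0, ((Real.sqrt 3 / 3 : ℝ) : ℂ), -((Real.sqrt 3 / 3 : ℝ) : ℂ)] := by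
  have h : ((Real.sqrt 3 / 3 : ℝ) : ℂ) * (ω - ω ^ 2) = Complex.I := by
    rw [ω_sq, ω_eq]; push_cast
    linear_combination (Complex.I / 3) * sqrt_three_sq
  ext k
  fin_cases k <;> simp only [W, Matrix.mulVec, dotProduct, Fin.sum_univ_three, Matrix.of_apply,
    Matrix.cons_val, Fin.zero_eta, Fin.mk_one, Fin.reduceFinMk]
  · ring
  · linear_combination -h
  · linear_combination h

theorem ω_pow_eq_exp (k : ℕ) : ω ^ k = Complex.exp (2 * Real.pi * Complex.I * (k / 3)) := by
  rw [ω, ← Complex.exp_nat_mul]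
  congr 1; ring

/-- Each vertex of the moving triangle is the first vertex with its time shifted by `k / 3`. -/
theorem vertex_eq (t : ℝ) (k : Fin 3) :
    let e : ℝ → ℂ := fun s => Complex.exp (2 * (Real.pi : ℂ) * Complex.I * (s : ℂ))
    (S (-2 * e t + e (-2 * t)) (2 * e (-t) + e (2 * t))).mulVec
        ![0, Complex.I, -Complex.I] k =
      ((Real.sqrt 3 / 3 : ℝ) : ℂ) *
        (2 * e (-(t - k / 3)) + e (2 * (t - k / 3)) + 2 * e (t - k / 3)
          - e (-2 * (t - k / 3))) := by
  intro e
  have hadd (a b : ℝ) : e (a + b) = e a * e b := by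
    simp only [e]; rw [← Complex.exp_add]; congr 1; push_cast; ring
  have hω (m : ℕ) : e (m / 3) = ω ^ m := by
    simp only [e]; rw [ω_pow_eq_exp]; push_cast; rfl
  have hone (n : ℕ) : e (-n) = 1 := by
    simp only [e]
    refine Complex.exp_eq_one_iff.2 ⟨-n, ?_⟩
    push_cast; ring
  have hk : (S (-2 * e t + e (-2 * t)) (2 * e (-t) + e (2 * t))).mulVec
        ![0, Complex.I, -Complex.I] k =
      ((Real.sqrt 3 / 3 : ℝ) : ℂ) * (ω ^ (k : ℕ) * (2 * e (-t) + e (2 * t))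
        - ω ^ (2 * (k : ℕ)) * (-2 * e t + e (-2 * t))) := by
    rw [triangle_eq_W_mulVec, S_mulVec_W_mulVec]
    fin_cases k <;> simp only [W, Matrix.mulVec, dotProduct, Fin.sum_univ_three, Matrix.of_apply,
      Matrix.cons_val, Fin.zero_eta, Fin.mk_one, Fin.reduceFinMk]
    · ring
    · ring
    · linear_combination ((Real.sqrt 3 / 3 : ℝ) : ℂ) * ω * (-2 * e t + e (-2 * t)) * ω_pow_three
  rw [hk, show -(t - (k : ℕ) / 3 : ℝ) = -t + ((k : ℕ) : ℝ) / 3 by ring,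
    show (2 * (t - (k : ℕ) / 3) : ℝ) = 2 * t + ((k : ℕ) : ℝ) / 3 + -((k : ℕ) : ℝ) by ring,
    show (t - (k : ℕ) / 3 : ℝ) = t + ((2 * (k : ℕ) : ℕ) : ℝ) / 3 + -((k : ℕ) : ℝ) by
      push_cast; ring,
    show (-2 * (t + ((2 * (k : ℕ) : ℕ) : ℝ) / 3 + -((k : ℕ) : ℝ)) : ℝ)
      = -2 * t + ((2 * (k : ℕ) : ℕ) : ℝ) / 3 by push_cast; ring]
  simp only [hadd, hω, hone]
  ring

theorem first_vertex_eq (u : ℝ) :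
    let e : ℝ → ℂ := fun s => Complex.exp (2 * (Real.pi : ℂ) * Complex.I * (s : ℂ))
    ((Real.sqrt 3 / 3 : ℝ) : ℂ) * (2 * e (-u) + e (2 * u) + 2 * e u - e (-2 * u)) =
      ((4 * Real.sqrt 3 / 3 : ℝ) : ℂ) * ((Real.cos (2 * Real.pi * u) : ℝ) : ℂ)
        + Complex.I * (((2 * Real.sqrt 3 / 3 : ℝ) : ℂ) *
          ((Real.sin (4 * Real.pi * u) : ℝ) : ℂ)) := by
  intro e
  have he (s : ℝ) : e s = (Real.cos (2 * Real.pi * s) : ℝ) +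
      (Real.sin (2 * Real.pi * s) : ℝ) * Complex.I := by
    rw [Complex.ofReal_cos, Complex.ofReal_sin, ← Complex.exp_mul_I]
    simp only [e]; congr 1; push_cast; ring
  rw [he, he, he, he, show 2 * Real.pi * -u = -(2 * Real.pi * u) by ring,
    show 2 * Real.pi * (-2 * u) = -(4 * Real.pi * u) by ring,
    show 2 * Real.pi * (2 * u) = 4 * Real.pi * u by ring]
  simp only [Real.cos_neg, Real.sin_neg]
  push_cast; ring

theorem figure_eight_equation (u : ℝ) :
    let X := 4 * Real.sqrt 3 / 3 * Real.cos (2 * Real.pi * u)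
    let Y := 2 * Real.sqrt 3 / 3 * Real.sin (4 * Real.pi * u)
    X ^ 2 = 3 / 16 * X ^ 4 + Y ^ 2 := by
  intro X Y
  have h3 : Real.sqrt 3 ^ 2 = 3 := Real.sq_sqrt (by norm_num)
  have h4 : Real.sqrt 3 ^ 4 = 9 := by rw [show 4 = 2 * 2 from rfl, pow_mul, h3]; norm_num
  simp only [X, Y]
  rw [show 4 * Real.pi * u = 2 * (2 * Real.pi * u) by ring, Real.sin_two_mul]
  simp only [mul_pow, div_pow, h3, h4, Real.sin_sq]
  ring

theorem figure_eight_orbit (t : ℝ) :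
    let e : ℝ → ℂ := fun s => Complex.exp (2 * (Real.pi : ℂ) * Complex.I * (s : ℂ))
    let Δt : Fin 3 → ℂ :=
      (S (-2 * e t + e (-2 * t)) (2 * e (-t) + e (2 * t))).mulVec
        ![0, Complex.I, -Complex.I]
    Δt 0 = ((4 * Real.sqrt 3 / 3 : ℝ) : ℂ) * ((Real.cos (2 * Real.pi * t) : ℝ) : ℂ)
        + Complex.I * (((2 * Real.sqrt 3 / 3 : ℝ) : ℂ) * ((Real.sin (4 * Real.pi * t) : ℝ) : ℂ)) ∧
    ∀ k : Fin 3, ((Δt k).re) ^ 2 = (3 / 16) * ((Δt k).re) ^ 4 + ((Δt k).im) ^ 2 := by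
  intro e Δt
  have hΔ (k : Fin 3) : Δt k =
      ((4 * Real.sqrt 3 / 3 : ℝ) : ℂ) * ((Real.cos (2 * Real.pi * (t - k / 3)) : ℝ) : ℂ)
        + Complex.I * (((2 * Real.sqrt 3 / 3 : ℝ) : ℂ) *
          ((Real.sin (4 * Real.pi * (t - k / 3)) : ℝ) : ℂ)) :=
    (vertex_eq t k).trans (first_vertex_eq (t - k / 3))
  clear_value Δt
  refine ⟨?_, fun k => ?_⟩
  · rw [hΔ 0, Fin.val_zero, Nat.cast_zero, zero_div, sub_zero]
  have hre : (Δt k).re = 4 * Real.sqrt 3 / 3 * Real.cos (2 * Real.pi * (t - k / 3)) := by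
    rw [hΔ k, Complex.add_re, Complex.I_mul_re, ← Complex.ofReal_mul,
      ← Complex.ofReal_mul, Complex.ofReal_re, Complex.ofReal_im, neg_zero, add_zero]
  have him : (Δt k).im = 2 * Real.sqrt 3 / 3 * Real.sin (4 * Real.pi * (t - k / 3)) := by
    rw [hΔ k, Complex.add_im, Complex.I_mul_im, ← Complex.ofReal_mul,
      ← Complex.ofReal_mul, Complex.ofReal_re, Complex.ofReal_im, zero_add]
  rw [hre, him]
  exact figure_eight_equation _
end
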